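/- Let n ≥ 2 and let X ⊆ ℂ^n be an open set, with d the Euclidean distance on ℂ^n. Let A, B ⊆ X be open sets with compact closures contained in X such that B is a convex 2-bump on A, and let K be a compact subset of A. Assume that f : 𝔻̄ → X is a continuous map, holomorphic on 𝔻, such that f(b𝔻) ∩ cl(A) = ∅, and let r with 0 < r < 1 be such that f(𝔻̄ \ r𝔻) ∩ K = ∅. Then for every ε > 0 there is a continuous map g : 𝔻̄ → X, holomorphic on 𝔻, with the following properties: (i) g(b𝔻) ∩ cl(A ∪ B) = ∅; (ii) d(g(ζ), f(ζ)) < ε for all |ζ| ≤ r; (iii) g(𝔻̄ \ r𝔻) ∩ K = ∅; (iv) g(0) = f(0); (v) g′(0) = R·f′(0) for some R with r < R < 1. -/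

import Mathlib

open Metric

/-- `B` is a convex 2-bump on `A` (inside the open set `X ⊆ ℂⁿ`, `n ≥ 2`): there are an
open set `Ω ⊆ X` containing `cl(B)`, a biholomorphism `Φ` from `Ω` onto a convex open set
`ω ⊆ ℂⁿ`, and smooth functions `ρ_B ≤ ρ_A` on `ω` with
`Φ(A ∩ Ω) = {ρ_A < 0}`, `Φ((A ∪ B) ∩ Ω) = {ρ_B < 0}`, whose real Hessians are positive
definite on the (real 4-dimensional) subspace spanned by `e₁, i e₁, e₂, i e₂`
(i.e. the complex span of `e₁, e₂`), and such that `d(tρ_A + (1-t)ρ_B)` is nonzero on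
that subspace for every `t ∈ [0,1]` at every point of `ω`. -/
def IsConvexTwoBump (n : ℕ) (hn : 2 ≤ n)
    (X A B : Set (EuclideanSpace ℂ (Fin n))) : Prop :=
  ∃ (Ω ω : Set (EuclideanSpace ℂ (Fin n)))
    (Φ Ψ : EuclideanSpace ℂ (Fin n) → EuclideanSpace ℂ (Fin n))
    (ρA ρB : EuclideanSpace ℂ (Fin n) → ℝ),
    IsOpen Ω ∧ Ω ⊆ X ∧ closure B ⊆ Ω ∧
    IsOpen ω ∧ Convex ℝ ω ∧
    DifferentiableOn ℂ Φ Ω ∧ DifferentiableOn ℂ Ψ ω ∧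
    Φ '' Ω = ω ∧ (∀ z ∈ Ω, Ψ (Φ z) = z) ∧ (∀ w ∈ ω, Φ (Ψ w) = w) ∧
    ContDiffOn ℝ (⊤ : ℕ∞) ρA ω ∧ ContDiffOn ℝ (⊤ : ℕ∞) ρB ω ∧
    (∀ z ∈ ω, ρB z ≤ ρA z) ∧
    Φ '' (A ∩ Ω) = {z ∈ ω | ρA z < 0} ∧
    Φ '' ((A ∪ B) ∩ Ω) = {z ∈ ω | ρB z < 0} ∧
    (∀ z ∈ ω, ∀ w ∈ Submodule.span ℂ
        {EuclideanSpace.single (⟨0, by omega⟩ : Fin n) (1 : ℂ),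
         EuclideanSpace.single (⟨1, by omega⟩ : Fin n) (1 : ℂ)}, w ≠ 0 →
      0 < fderiv ℝ (fderiv ℝ ρA) z w w ∧ 0 < fderiv ℝ (fderiv ℝ ρB) z w w) ∧
    (∀ t ∈ Set.Icc (0 : ℝ) 1, ∀ z ∈ ω, ∃ w ∈ Submodule.span ℂ
        {EuclideanSpace.single (⟨0, by omega⟩ : Fin n) (1 : ℂ),
         EuclideanSpace.single (⟨1, by omega⟩ : Fin n) (1 : ℂ)},
      t * fderiv ℝ ρA z w + (1 - t) * fderiv ℝ ρB z w ≠ 0)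

/-- A continuous scalar function on the circle is a uniform limit of Laurent polynomials. -/
theorem exists_laurent_approx_scalar (a : C(Circle, ℂ)) {ε : ℝ} (hε : 0 < ε) :
    ∃ (M : ℕ) (p : ℂ → ℂ), Differentiable ℂ p ∧
      ∀ ζ : Circle, ‖(ζ : ℂ) ^ M * a ζ - p ζ‖ < ε := by
  have : Fact (0 < (1 : ℝ)) := ⟨one_pos⟩
  let e := AddCircle.homeomorphCircle (T := (1 : ℝ)) one_ne_zero
  let a' : C(AddCircle (1 : ℝ), ℂ) := a.comp ⟨e, e.continuous⟩
  have hmem : a' ∈ (Submodule.span ℂ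
      (Set.range <| @fourier (1 : ℝ))).topologicalClosure := by
    rw [span_fourier_closure_eq_top]; trivial
  obtain ⟨b, hb, hab⟩ := Metric.mem_closure_iff.1 hmem ε hε
  have key : ∃ (M : ℕ) (p : ℂ → ℂ), Differentiable ℂ p ∧
      ∀ x, (AddCircle.toCircle x : ℂ) ^ M * b x = p (AddCircle.toCircle x) := by
    clear hab
    induction hb using Submodule.span_induction with
    | mem x hx =>
      obtain ⟨n, rfl⟩ := hx
      refine ⟨n.natAbs, fun z => z ^ (n + n.natAbs).toNat, by fun_prop, fun x => ?_⟩
      rw [fourier_apply, AddCircle.toCircle_zsmul, Circle.coe_zpow]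
      have h0 := Circle.coe_ne_zero (AddCircle.toCircle x)
      generalize (AddCircle.toCircle x : ℂ) = z at h0 ⊢
      change z ^ n.natAbs * z ^ n = z ^ (n + n.natAbs).toNat
      rw [← zpow_natCast, ← zpow_natCast, ← zpow_add₀ h0]
      congr 1
      omega
    | zero => exact ⟨0, fun _ => 0, by fun_prop, by simp⟩
    | add b c _ _ hb hc =>
      obtain ⟨M, p, hp, hbp⟩ := hb
      obtain ⟨N, q, hq, hcq⟩ := hc
      refine ⟨M + N, fun z => z ^ N * p z + z ^ M * q z, by fun_prop, fun x => ?_⟩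
      simp only [ContinuousMap.add_apply, ← hbp, ← hcq]
      ring
    | smul c b _ hb =>
      obtain ⟨M, p, hp, hbp⟩ := hb
      refine ⟨M, fun z => c * p z, by fun_prop, fun x => ?_⟩
      simp only [ContinuousMap.smul_apply, ← hbp, smul_eq_mul]
      ring
  obtain ⟨M, p, hp, hbp⟩ := key
  refine ⟨M, p, hp, fun ζ => ?_⟩
  obtain ⟨x, rfl⟩ := e.surjective ζ
  have hx : e x = AddCircle.toCircle x := AddCircle.homeomorphCircle_apply _ x
  have h1 : ‖a (e x) - b x‖ < ε := by
    have := (ContinuousMap.dist_apply_le_dist (f := a') (g := b) x).trans_lt hab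
    rwa [dist_eq_norm] at this
  rw [hx] at h1 ⊢
  rw [← hbp, ← mul_sub, norm_mul, norm_pow, Circle.norm_coe, one_pow, one_mul]
  exact h1

/-- A continuous vector function on the circle is a uniform limit of Laurent polynomials. -/
theorem exists_laurent_approx {n : ℕ} (a : C(Circle, EuclideanSpace ℂ (Fin n)))
    {ε : ℝ} (hε : 0 < ε) :
    ∃ (M : ℕ) (p : ℂ → EuclideanSpace ℂ (Fin n)), Differentiable ℂ p ∧
      ∀ ζ : Circle, ‖(ζ : ℂ) ^ M • a ζ - p ζ‖ < ε := by
  have hn : (0 : ℝ) < n + 1 := by positivity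
  have h (i : Fin n) := exists_laurent_approx_scalar
    (⟨fun ζ => a ζ i, by fun_prop⟩ : C(Circle, ℂ)) (div_pos hε hn)
  choose M p hp hap using h
  simp only [ContinuousMap.coe_mk] at hap
  refine ⟨∑ i, M i, fun z => ∑ i, (z ^ (∑ j ∈ Finset.univ.erase i, M j) * p i z) •
    EuclideanSpace.single i (1 : ℂ), by fun_prop, fun ζ => ?_⟩
  have hsum : (ζ : ℂ) ^ (∑ i, M i) • a ζ = ∑ i, (((ζ : ℂ) ^ (∑ j ∈ Finset.univ.erase i, M j) *
      ((ζ : ℂ) ^ M i * a ζ i)) • EuclideanSpace.single i (1 : ℂ)) := by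
    generalize (ζ : ℂ) = z
    generalize a ζ = w
    ext k
    simp only [PiLp.smul_apply, WithLp.ofLp_sum, WithLp.ofLp_smul, Finset.sum_apply,
      Pi.smul_apply, smul_eq_mul]
    rw [← Finset.add_sum_erase _ M (Finset.mem_univ k), pow_add, eq_comm]
    refine (Finset.sum_eq_single k (fun b _ hb => by simp [hb.symm]) (by simp)).trans ?_
    simp
    ring
  rw [hsum, ← Finset.sum_sub_distrib]
  refine (norm_sum_le _ _).trans_lt ?_
  have hb : ∀ i ∈ Finset.univ, ‖((ζ : ℂ) ^ (∑ j ∈ Finset.univ.erase i, M j) *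
      ((ζ : ℂ) ^ M i * a ζ i)) • EuclideanSpace.single i (1 : ℂ) -
      ((ζ : ℂ) ^ (∑ j ∈ Finset.univ.erase i, M j) * p i ζ) •
        EuclideanSpace.single i (1 : ℂ)‖ ≤ ε / (n + 1) := by
    intro i _
    rw [← sub_smul, ← mul_sub, norm_smul, norm_mul, norm_pow, Circle.norm_coe, one_pow, one_mul,
      PiLp.norm_single, norm_one, mul_one]
    exact (hap i ζ).le
  refine (Finset.sum_le_sum hb).trans_lt ?_
  rw [Finset.sum_const, Finset.card_univ, Fintype.card_fin, nsmul_eq_mul]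
  rw [← mul_div_assoc, div_lt_iff₀ hn]
  nlinarith

/-- A continuous family of holomorphic maps on the disc of radius two is uniformly approximated on
the unit disc by polynomials whose coefficients depend continuously on the parameter. -/
theorem exists_taylor_approx {n : ℕ} (F : Circle → ℂ → EuclideanSpace ℂ (Fin n))
    (hF : ContinuousOn (fun q : Circle × ℂ => F q.1 q.2) (Set.univ ×ˢ closedBall 0 2))
    (hol : ∀ ζ, DifferentiableOn ℂ (F ζ) (ball 0 2)) {ε : ℝ} (hε : 0 < ε) :
    ∃ (m : ℕ) (a : ℕ → C(Circle, EuclideanSpace ℂ (Fin n))),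
      ∀ ζ : Circle, ∀ η ∈ closedBall (0 : ℂ) 1,
        ‖F ζ η - ∑ k ∈ Finset.range m, η ^ k • a k ζ‖ < ε := by
  have hcirc : Continuous (fun q : Circle × ℝ => F q.1 (circleMap 0 2 q.2)) := by
    refine hF.comp_continuous (f := fun q : Circle × ℝ => (q.1, circleMap 0 2 q.2))
      (by fun_prop) fun q => ⟨trivial, ?_⟩
    exact sphere_subset_closedBall (circleMap_mem_sphere 0 (by norm_num) _)
  let a : ℕ → C(Circle, EuclideanSpace ℂ (Fin n)) := fun k =>
    ⟨fun ζ => cauchyPowerSeries (F ζ) 0 2 k fun _ => 1, by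
      simp only [cauchyPowerSeries_apply, circleIntegral, deriv_circleMap]
      have h1 : Continuous fun ζ : Circle => ∫ θ : ℝ in 0..2 * Real.pi,
          (circleMap 0 2 θ * Complex.I) •
          ((1 / (circleMap 0 2 θ - 0)) ^ k : ℂ) • (circleMap 0 2 θ - 0)⁻¹ •
            F ζ (circleMap 0 2 θ) := by
        refine intervalIntegral.continuous_parametric_intervalIntegral_of_continuous' ?_ _ _
        have h0 : Continuous fun q : Circle × ℝ => (circleMap 0 2 q.2 - 0)⁻¹ :=
          Continuous.inv₀ (by fun_prop) (by simp)
        simp only [Function.uncurry_def, one_div]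
        have h2 : Continuous fun q : Circle × ℝ => circleMap 0 2 q.2 * Complex.I := by fun_prop
        exact h2.smul ((h0.pow k).smul (h0.smul hcirc))
      exact (continuous_const_smul (2 * (Real.pi : ℂ) * Complex.I)⁻¹).comp h1⟩
  obtain ⟨C, hC⟩ : ∃ C, ∀ ζ : Circle, ∀ η ∈ closedBall (0 : ℂ) 2, ‖F ζ η‖ ≤ C := by
    obtain ⟨C, hC⟩ :=
      (isCompact_univ.prod (isCompact_closedBall (0 : ℂ) 2)).exists_bound_of_continuousOn hF
    exact ⟨C, fun ζ η hη => hC (ζ, η) ⟨trivial, hη⟩⟩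
  have hC0 : 0 ≤ C := (norm_nonneg _).trans (hC 1 0 (by simp))
  have ha : ∀ k ζ, ‖a k ζ‖ ≤ C * (1 / 2) ^ k := by
    intro k ζ
    have h1 := (cauchyPowerSeries (F ζ) 0 2 k).le_opNorm fun _ => (1 : ℂ)
    simp only [norm_one, Finset.prod_const_one, mul_one] at h1
    refine h1.trans ((norm_cauchyPowerSeries_le _ _ _ _).trans ?_)
    rw [abs_two, inv_eq_one_div (2 : ℝ)]
    gcongr
    rw [inv_mul_le_iff₀ Real.two_pi_pos]
    have := intervalIntegral.integral_mono_on (μ := MeasureTheory.volume) Real.two_pi_pos.le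
      (f := fun θ => ‖F ζ (circleMap 0 2 θ)‖) (g := fun _ => C)
      (Continuous.intervalIntegrable (by
        exact (hcirc.comp (Continuous.prodMk_right ζ)).norm) _ _)
      (by simp) (fun θ _ => hC ζ _ (sphere_subset_closedBall
        (circleMap_mem_sphere 0 (by norm_num) _)))
    simpa using this
  obtain ⟨m, hm⟩ : ∃ m : ℕ, 2 * C * (1 / 2 : ℝ) ^ m < ε := by
    have := (tendsto_pow_atTop_nhds_zero_of_lt_one (r := (1 / 2 : ℝ)) (by norm_num)
      (by norm_num)).const_mul (2 * C)
    rw [mul_zero] at this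
    exact (this.eventually (gt_mem_nhds hε)).exists
  refine ⟨m, a, fun ζ η hη => lt_of_le_of_lt ?_ hm⟩
  have hη1 : ‖η‖ ≤ 1 := by simpa using hη
  have hps : HasSum (fun k => η ^ k • a k ζ) (F ζ η) := by
    have hd : DiffContOnCl ℂ (F ζ) (ball 0 ((2 : NNReal) : ℝ)) := by
      refine ⟨by simpa using hol ζ, ?_⟩
      refine ContinuousOn.mono (s := closedBall 0 2) ?_
        (by simpa using closure_ball_subset_closedBall)
      exact hF.comp (Continuous.prodMk_right ζ).continuousOn fun η hη => ⟨trivial, hη⟩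
    have := (hd.hasFPowerSeriesOnBall (by norm_num)).hasSum (y := η) (by
      rw [Metric.mem_eball, edist_zero_right, enorm_eq_nnnorm]
      refine lt_of_le_of_lt (b := 1) (ENNReal.coe_le_coe.2 ?_) (by norm_num)
      exact_mod_cast hη1)
    rw [zero_add] at this
    refine this.congr_fun fun k => ?_
    exact ((cauchyPowerSeries (F ζ) 0 2).apply_eq_pow_smul_coeff (n := k)).symm
  have hb : ∀ k, ‖η ^ k • a k ζ‖ ≤ C * (1 / 2) ^ k := fun k => by
    rw [norm_smul, norm_pow]
    exact (mul_le_of_le_one_left (norm_nonneg _) (pow_le_one₀ (norm_nonneg _) hη1)).trans (ha k ζ)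
  have := norm_sub_le_of_geometric_bound_of_hasSum (by norm_num) hb hps m
  rw [norm_sub_rev]
  refine this.trans (le_of_eq ?_)
  ring

/-- Runge-type approximation of the nonlinear part of a family of discs by entire maps. -/
theorem exists_entire_approx {n : ℕ} (F : Circle → ℂ → EuclideanSpace ℂ (Fin n))
    (hF : ContinuousOn (fun q : Circle × ℂ => F q.1 q.2) (Set.univ ×ˢ closedBall 0 2))
    (hol : ∀ ζ, DifferentiableOn ℂ (F ζ) (ball 0 2)) {ε : ℝ} (hε : 0 < ε) :
    ∃ (M : ℕ) (h : ℂ × ℂ → EuclideanSpace ℂ (Fin n)), Differentiable ℂ h ∧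
      ∀ ζ : Circle, ∀ η ∈ closedBall (0 : ℂ) 1,
        ‖(ζ : ℂ) ^ M • (F ζ η - F ζ 0) - η • h (ζ, η)‖ < ε := by
  obtain ⟨m, a, ha⟩ := exists_taylor_approx F hF hol (ε := ε / 3) (by positivity)
  have hm : (0 : ℝ) < m + 1 := by positivity
  have h (k : ℕ) := exists_laurent_approx (a k) (ε := ε / 3 / (m + 1)) (by positivity)
  choose M p hp hap using h
  let I := Finset.range m
  refine ⟨∑ i ∈ I, M i, fun q => ∑ k ∈ I.erase 0,
    (q.1 ^ (∑ j ∈ I.erase k, M j) * q.2 ^ (k - 1)) • p k q.1, ?_, fun ζ η hη => ?_⟩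
  · have hp' (k : ℕ) : Differentiable ℂ (fun q : ℂ × ℂ => p k q.1) :=
      (hp k).comp differentiable_fst
    fun_prop
  have hη1 : ‖η‖ ≤ 1 := by simpa using hη
  have hn : ‖(ζ : ℂ)‖ = 1 := Circle.norm_coe ζ
  have hap' (k : ℕ) := hap k ζ
  have e1 := ha ζ η hη
  have e0 := ha ζ 0 (by simp)
  generalize (ζ : ℂ) = z at *
  have hsplit : ∑ k ∈ I, η ^ k • a k ζ - ∑ k ∈ I, (0 : ℂ) ^ k • a k ζ
      = ∑ k ∈ I.erase 0, η ^ k • a k ζ := by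
    rw [← Finset.sum_sub_distrib]
    symm
    refine Finset.sum_subset_zero_on_sdiff (Finset.erase_subset _ _) (fun k hk => ?_)
      fun k hk => ?_
    · have : k = 0 := by
        by_contra h0
        exact (Finset.mem_sdiff.1 hk).2 (Finset.mem_erase.2 ⟨h0, (Finset.mem_sdiff.1 hk).1⟩)
      simp [this]
    · simp [(Finset.mem_erase.1 hk).1]
  have e2 : ‖(F ζ η - F ζ 0) - ∑ k ∈ I.erase 0, η ^ k • a k ζ‖ < ε / 3 + ε / 3 := by
    rw [← hsplit, sub_sub_sub_comm]
    exact (norm_sub_le _ _).trans_lt (add_lt_add e1 e0)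
  have e3 : ‖z ^ (∑ i ∈ I, M i) • (∑ k ∈ I.erase 0, η ^ k • a k ζ) - η • ∑ k ∈ I.erase 0,
      (z ^ (∑ j ∈ I.erase k, M j) * η ^ (k - 1)) • p k z‖ ≤ ε / 3 := by
    rw [Finset.smul_sum, Finset.smul_sum, ← Finset.sum_sub_distrib]
    refine (norm_sum_le _ _).trans ?_
    have hb : ∀ k ∈ I.erase 0, ‖z ^ (∑ i ∈ I, M i) • η ^ k • a k ζ -
        η • (z ^ (∑ j ∈ I.erase k, M j) * η ^ (k - 1)) • p k z‖ ≤ ε / 3 / (m + 1) := by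
      intro k hk
      obtain ⟨hk0, hkI⟩ := Finset.mem_erase.1 hk
      have hfac : z ^ (∑ i ∈ I, M i) • η ^ k • a k ζ -
          η • (z ^ (∑ j ∈ I.erase k, M j) * η ^ (k - 1)) • p k z =
          (z ^ (∑ j ∈ I.erase k, M j) * η ^ k) • (z ^ M k • a k ζ - p k z) := by
        obtain ⟨j, rfl⟩ := Nat.exists_eq_succ_of_ne_zero hk0
        rw [← Finset.add_sum_erase _ M hkI, pow_add]
        simp only [Nat.succ_sub_one, smul_sub, smul_smul, pow_succ, Nat.succ_eq_add_one]
        congr 2 <;> ring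
      rw [hfac, norm_smul, norm_mul, norm_pow, hn, one_pow, one_mul, norm_pow]
      exact (mul_le_of_le_one_left (norm_nonneg _) (pow_le_one₀ (norm_nonneg _) hη1)).trans
        (hap' k).le
    refine (Finset.sum_le_sum hb).trans ?_
    rw [Finset.sum_const, nsmul_eq_mul, mul_div_assoc', div_le_iff₀ hm, mul_comm]
    have hcard : ((I.erase 0).card : ℝ) ≤ m := by
      exact_mod_cast (Finset.card_le_card (Finset.erase_subset _ _)).trans (by simp [I])
    gcongr
    linarith
  calc _ = ‖z ^ (∑ i ∈ I, M i) • ((F ζ η - F ζ 0) - ∑ k ∈ I.erase 0, η ^ k • a k ζ) +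
        (z ^ (∑ i ∈ I, M i) • (∑ k ∈ I.erase 0, η ^ k • a k ζ) - η • ∑ k ∈ I.erase 0,
          (z ^ (∑ j ∈ I.erase k, M j) * η ^ (k - 1)) • p k z)‖ := by
        congr 1
        rw [smul_sub _ (F ζ η - F ζ 0)]
        abel
    _ < (ε / 3 + ε / 3) + ε / 3 := by
        refine (norm_add_le _ _).trans_lt (add_lt_add_of_lt_of_le ?_ e3)
        rwa [norm_smul, norm_pow, hn, one_pow, one_mul]
    _ = ε := by ring

/-- Approximate solution of a Riemann-Hilbert boundary value problem: the boundary of `f` is pushed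
along the analytic discs `F ζ` attached at the boundary points `f ζ = F ζ 0`. -/
theorem exists_riemann_hilbert {n : ℕ} (f : ℂ → EuclideanSpace ℂ (Fin n))
    (hf_cont : ContinuousOn f (closedBall (0 : ℂ) 1))
    (hf_hol : DifferentiableOn ℂ f (ball (0 : ℂ) 1))
    (F : Circle → ℂ → EuclideanSpace ℂ (Fin n))
    (hF : ContinuousOn (fun q : Circle × ℂ => F q.1 q.2) (Set.univ ×ˢ closedBall 0 2))
    (hol : ∀ ζ, DifferentiableOn ℂ (F ζ) (ball 0 2)) (hF0 : ∀ ζ : Circle, F ζ 0 = f ζ)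
    {U V : Set (EuclideanSpace ℂ (Fin n))} (hU : IsOpen U) (hV : IsOpen V)
    (hFU : ∀ ζ, ∀ η ∈ closedBall (0 : ℂ) 1, F ζ η ∈ U)
    (hFV : ∀ ζ, ∀ η ∈ sphere (0 : ℂ) 1, F ζ η ∈ V)
    {r : ℝ} (hr1 : r < 1) {ε : ℝ} (hε : 0 < ε) :
    ∃ g : ℂ → EuclideanSpace ℂ (Fin n),
      ContinuousOn g (closedBall (0 : ℂ) 1) ∧ DifferentiableOn ℂ g (ball (0 : ℂ) 1) ∧
      (∀ ζ ∈ sphere (0 : ℂ) 1, g ζ ∈ V) ∧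
      (∀ ζ ∈ closedBall (0 : ℂ) 1, dist (g ζ) (f ζ) < ε ∨ g ζ ∈ U) ∧
      (∀ ζ ∈ closedBall (0 : ℂ) r, dist (g ζ) (f ζ) < ε) ∧
      g 0 = f 0 ∧ deriv g 0 = deriv f 0 := by
  have hF1 : ContinuousOn (fun q : Circle × ℂ => F q.1 q.2) (Set.univ ×ˢ closedBall 0 1) :=
    hF.mono (Set.prod_mono le_rfl (closedBall_subset_closedBall (by norm_num)))
  obtain ⟨δU, hδU, hUsub⟩ :=
    ((isCompact_univ.prod (isCompact_closedBall (0 : ℂ) 1)).image_of_continuousOn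
    hF1).exists_thickening_subset_open hU (by
      rintro _ ⟨q, hq, rfl⟩; exact hFU _ _ hq.2)
  obtain ⟨δV, hδV, hVsub⟩ :=
    ((isCompact_univ.prod (isCompact_sphere (0 : ℂ) 1)).image_of_continuousOn
    (hF1.mono (Set.prod_mono le_rfl sphere_subset_closedBall))).exists_thickening_subset_open hV (by
      rintro _ ⟨q, hq, rfl⟩; exact hFV _ _ hq.2)
  obtain ⟨M, h, hh, happ⟩ := exists_entire_approx F hF hol (lt_min hδU hδV)
  let Q : ℂ × ℂ → EuclideanSpace ℂ (Fin n) := fun q => f q.1 + (q.1 ^ M)⁻¹ • q.2 • h q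
  have hQ : ∀ ζ : Circle, ∀ η ∈ closedBall (0 : ℂ) 1, dist (Q (ζ, η)) (F ζ η) < min δU δV := by
    intro ζ η hη
    have h1 := happ ζ η hη
    rw [dist_comm, dist_eq_norm]
    have hz : ((ζ : ℂ) ^ M) ≠ 0 := pow_ne_zero _ (Circle.coe_ne_zero ζ)
    have hn : ‖(ζ : ℂ) ^ M‖ = 1 := by rw [norm_pow, Circle.norm_coe, one_pow]
    have heq : (ζ : ℂ) ^ M • (F ζ η - Q (ζ, η)) =
        (ζ : ℂ) ^ M • (F ζ η - F ζ 0) - η • h (ζ, η) := by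
      change _ • (F ζ η - (f ζ + _)) = _
      rw [hF0, ← sub_sub, smul_sub _ (_ - _), smul_inv_smul₀ hz]
    rw [← heq, norm_smul, hn, one_mul] at h1
    exact h1
  have hQU : ∀ ζ ∈ sphere (0 : ℂ) 1, ∀ η ∈ closedBall (0 : ℂ) 1, Q (ζ, η) ∈ U := by
    intro ζ hζ η hη
    exact hUsub (mem_thickening_iff.2 ⟨_, ⟨(⟨ζ, hζ⟩, η), ⟨trivial, hη⟩, rfl⟩,
      (hQ ⟨ζ, hζ⟩ η hη).trans_le (min_le_left _ _)⟩)
  have hQV : ∀ ζ ∈ sphere (0 : ℂ) 1, ∀ η ∈ sphere (0 : ℂ) 1, Q (ζ, η) ∈ V := by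
    intro ζ hζ η hη
    exact hVsub (mem_thickening_iff.2 ⟨_, ⟨(⟨ζ, hζ⟩, η), ⟨trivial, hη⟩, rfl⟩,
      (hQ ⟨ζ, hζ⟩ η (sphere_subset_closedBall hη)).trans_le (min_le_right _ _)⟩)
  obtain ⟨s, hs0, hs1, hsU⟩ : ∃ s : ℝ, max r (1 / 2) ≤ s ∧ s < 1 ∧
      ∀ ζ : ℂ, s < ‖ζ‖ → ‖ζ‖ ≤ 1 → ∀ η ∈ closedBall (0 : ℂ) 1, Q (ζ, η) ∈ U := by
    let T : Set (ℂ × ℂ) := (closedBall 0 1 \ ball 0 (1 / 2)) ×ˢ closedBall 0 1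
    have hT : IsCompact T := ((isCompact_closedBall _ _).diff isOpen_ball).prod
      (isCompact_closedBall _ _)
    have hQc : ContinuousOn Q T := by
      have h1 : ContinuousOn (fun q : ℂ × ℂ => f q.1) T :=
        hf_cont.comp continuousOn_fst fun q hq => hq.1.1
      have h2 : ContinuousOn (fun q : ℂ × ℂ => (q.1 ^ M)⁻¹) T := by
        refine ContinuousOn.inv₀ (by fun_prop) fun q hq => pow_ne_zero _ ?_
        intro h0
        exact hq.1.2 (by simp [h0])
      have h3 : ContinuousOn h T := hh.continuous.continuousOn
      exact h1.add (h2.smul (continuousOn_snd.smul h3))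
    have hW : IsCompact (T ∩ Q ⁻¹' Uᶜ) :=
      hT.of_isClosed_subset (hQc.preimage_isClosed_of_isClosed hT.isClosed hU.isClosed_compl)
        Set.inter_subset_left
    have hmem : ∀ s : ℝ, 1 / 2 ≤ s → (∀ q ∈ T ∩ Q ⁻¹' Uᶜ, ‖q.1‖ ≤ s) →
        ∀ ζ : ℂ, s < ‖ζ‖ → ‖ζ‖ ≤ 1 → ∀ η ∈ closedBall (0 : ℂ) 1, Q (ζ, η) ∈ U := by
      intro s hs hW ζ h1 h2 η hη
      by_contra hU
      refine absurd (hW (ζ, η) ⟨⟨⟨by simpa using h2, ?_⟩, hη⟩, hU⟩) (not_le.2 h1)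
      simp only [mem_ball, dist_zero_right, not_lt]
      linarith
    rcases (T ∩ Q ⁻¹' Uᶜ).eq_empty_or_nonempty with hem | hne
    · exact ⟨max r (1 / 2), le_rfl, max_lt hr1 (by norm_num), 
        hmem _ (le_max_right _ _) fun q hq => absurd hq (by rw [hem]; exact Set.notMem_empty q)⟩
    · obtain ⟨q, hq, hmax⟩ := hW.exists_isMaxOn hne (f := fun q => ‖q.1‖) (by fun_prop)
      refine ⟨max (max r (1 / 2)) ‖q.1‖, le_max_left _ _, max_lt (max_lt hr1 (by norm_num)) ?_,
        hmem _ ((le_max_right _ _).trans (le_max_left _ _))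
          fun q' hq' => (hmax hq').trans (le_max_right _ _)⟩
      have h1 : ‖q.1‖ ≤ 1 := by simpa using hq.1.1.1
      refine lt_of_le_of_ne h1 fun h1 => hq.2 (hQU q.1 (by simpa using h1) q.2 hq.1.2)
  obtain ⟨C, hC⟩ := ((isCompact_closedBall (0 : ℂ) 1).prod
    (isCompact_closedBall (0 : ℂ) 1)).exists_bound_of_continuousOn hh.continuous.continuousOn
  have hs0' : 0 ≤ s := by linarith [le_max_right r (1 / 2)]
  obtain ⟨N, hN⟩ : ∃ N : ℕ, s ^ (N + 2) * C < ε := by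
    have := ((tendsto_pow_atTop_nhds_zero_of_lt_one hs0' hs1).comp
      (Filter.tendsto_add_atTop_nat 2)).mul_const C
    rw [zero_mul] at this
    exact (this.eventually (gt_mem_nhds hε)).exists
  let g : ℂ → EuclideanSpace ℂ (Fin n) := fun ζ => f ζ + ζ ^ (N + 2) • h (ζ, ζ ^ (N + 2 + M))
  have hcorr : Differentiable ℂ fun ζ : ℂ => ζ ^ (N + 2) • h (ζ, ζ ^ (N + 2 + M)) := by
    have : Differentiable ℂ fun ζ : ℂ => h (ζ, ζ ^ (N + 2 + M)) :=
      hh.comp (f := fun ζ : ℂ => (ζ, ζ ^ (N + 2 + M))) (by fun_prop)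
    fun_prop
  have hpow : ∀ ζ ∈ closedBall (0 : ℂ) 1, ∀ k : ℕ, ζ ^ k ∈ closedBall (0 : ℂ) 1 := by
    intro ζ hζ k
    simp only [mem_closedBall, dist_zero_right, norm_pow] at hζ ⊢
    exact pow_le_one₀ (norm_nonneg _) hζ
  have hgQ : ∀ ζ : ℂ, ζ ≠ 0 → g ζ = Q (ζ, ζ ^ (N + 2 + M)) := by
    intro ζ hζ
    simp only [g, Q, smul_smul]
    congr 2
    field_simp
    ring
  have hclose : ∀ ζ : ℂ, ‖ζ‖ ≤ s → dist (g ζ) (f ζ) < ε := by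
    intro ζ hζ
    have hζ1 : ζ ∈ closedBall (0 : ℂ) 1 := by simpa using hζ.trans hs1.le
    simp only [g, dist_eq_norm, add_sub_cancel_left, norm_smul, norm_pow]
    refine lt_of_le_of_lt ?_ hN
    gcongr
    exact hC _ ⟨hζ1, hpow ζ hζ1 _⟩
  refine ⟨g, hf_cont.add hcorr.continuous.continuousOn, hf_hol.add hcorr.differentiableOn,
    fun ζ hζ => ?_, fun ζ hζ => ?_, fun ζ hζ => ?_, by simp [g], ?_⟩
  · have hn : ‖ζ‖ = 1 := by simpa using hζ
    rw [hgQ ζ (norm_ne_zero_iff.1 (by rw [hn]; norm_num))]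
    exact hQV ζ hζ _ (by simp [hn])
  · rcases le_or_gt ‖ζ‖ s with h1 | h1
    · exact Or.inl (hclose ζ h1)
    · right
      rw [hgQ ζ (norm_pos_iff.1 (hs0'.trans_lt h1))]
      exact hsU ζ h1 (by simpa using hζ) _ (hpow ζ hζ _)
  · exact hclose ζ ((le_max_left _ _).trans' (by simpa using hζ) |>.trans hs0)
  · have hfd : DifferentiableAt ℂ f 0 := hf_hol.differentiableAt (ball_mem_nhds _ one_pos)
    have hd : HasDerivAt (fun ζ : ℂ => ζ ^ (N + 2) • h (ζ, ζ ^ (N + 2 + M))) 0 0 := by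
      have h1 : DifferentiableAt ℂ (fun ζ : ℂ => h (ζ, ζ ^ (N + 2 + M))) 0 :=
        (hh.comp (f := fun ζ : ℂ => (ζ, ζ ^ (N + 2 + M))) (by fun_prop)).differentiableAt
      convert! (hasDerivAt_pow (N + 2) (0 : ℂ)).smul h1.hasDerivAt using 1
      simp
    have := (hfd.hasDerivAt.add hd).deriv
    rwa [add_zero] at this

section Slices

variable {E : Type*} [NormedAddCommGroup E] [NormedSpace ℝ E]

/-- A function with positive second derivative in the direction `w` increases strictly along `w`
from a point at which its derivative along `w` vanishes. -/
theorem lt_of_second_fderiv_pos {ω : Set E} (hω : Convex ℝ ω) {ρ : E → ℝ} {D : E → E →L[ℝ] ℝ}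
    {D₂ : E → E →L[ℝ] E →L[ℝ] ℝ} (hρ : ∀ x ∈ ω, HasFDerivAt ρ (D x) x)
    (hD : ∀ x ∈ ω, HasFDerivAt D (D₂ x) x) {z w : E} (hz : z ∈ ω) (hzw : z + w ∈ ω)
    (hpos : ∀ x ∈ ω, 0 < D₂ x w w) (hcrit : D z w = 0) : ρ z < ρ (z + w) := by
  have hmem : ∀ s ∈ Set.Icc (0 : ℝ) 1, z + s • w ∈ ω := fun s hs => by
    simpa using hω.add_smul_sub_mem hz hzw hs
  have hline : ∀ s : ℝ, HasDerivAt (fun s : ℝ => z + s • w) w s := fun s => by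
    simpa using ((hasDerivAt_id s).smul_const w).const_add z
  have h1 : ∀ s ∈ Set.Icc (0 : ℝ) 1,
      HasDerivAt (fun s : ℝ => ρ (z + s • w)) (D (z + s • w) w) s :=
    fun s hs => (hρ _ (hmem s hs)).comp_hasDerivAt s (hline s)
  have h2 : ∀ s ∈ Set.Icc (0 : ℝ) 1,
      HasDerivAt (fun s : ℝ => D (z + s • w) w) (D₂ (z + s • w) w w) s := by
    intro s hs
    have h3 : HasDerivAt (fun s : ℝ => D (z + s • w)) (D₂ (z + s • w) w) s :=
      (hD _ (hmem s hs)).comp_hasDerivAt s (hline s)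
    exact HasFDerivAt.comp_hasDerivAt (l := fun L : E →L[ℝ] ℝ => L w)
      (l' := ContinuousLinearMap.apply ℝ ℝ w) s (ContinuousLinearMap.apply ℝ ℝ w).hasFDerivAt h3
  obtain ⟨c, hc, hc'⟩ := exists_hasDerivAt_eq_slope (fun s : ℝ => ρ (z + s • w))
    (fun s : ℝ => D (z + s • w) w) one_pos
    (fun s hs => (h1 s hs).continuousAt.continuousWithinAt)
    (fun s hs => h1 s (Set.Ioo_subset_Icc_self hs))
  have hsub : Set.Icc 0 c ⊆ Set.Icc (0 : ℝ) 1 := Set.Icc_subset_Icc_right hc.2.le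
  obtain ⟨b, hb, hb'⟩ := exists_hasDerivAt_eq_slope (fun s : ℝ => D (z + s • w) w)
    (fun s : ℝ => D₂ (z + s • w) w w) hc.1
    (fun s hs => (h2 s (hsub hs)).continuousAt.continuousWithinAt)
    (fun s hs => h2 s (hsub (Set.Ioo_subset_Icc_self hs)))
  have hb2 := hpos _ (hmem b (hsub (Set.Ioo_subset_Icc_self hb)))
  rw [hb'] at hb2
  simp only [zero_smul, add_zero, hcrit, sub_zero, one_smul, div_one] at hb2 hc'
  have := (div_pos_iff_of_pos_right hc.1).1 hb2
  linarith

/-- A sublevel set at a noncritical value is the closure of the strict sublevel set. -/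
theorem mem_closure_sublevel {ω : Set E} (hω : IsOpen ω) {ρ : E → ℝ} {D : E →L[ℝ] ℝ} {z : E}
    (hz : z ∈ ω) (hρ : HasFDerivAt ρ D z) (hD : D ≠ 0) (hle : ρ z ≤ 0) :
    z ∈ closure {x ∈ ω | ρ x < 0} := by
  by_contra hcl
  refine hD (IsLocalMin.hasFDerivAt_eq_zero ?_ hρ)
  filter_upwards [isClosed_closure.isOpen_compl.mem_nhds hcl, hω.mem_nhds hz] with x hx hxω
  by_contra hlt
  exact hx (subset_closure ⟨hxω, (not_le.1 hlt).trans_le hle⟩)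

/-- A family of functions, strictly convex along `S`, gains a uniform amount on moving by a fixed
distance along `S` in a direction in which the derivative vanishes. -/
theorem exists_uniform_gain [ProperSpace E] {ω : Set E} {ρ : ℝ → E → ℝ}
    {D : ℝ → E → E →L[ℝ] ℝ} {S : Set E} (hS : IsClosed S)
    (hρ : ContinuousOn (fun q : ℝ × E => ρ q.1 q.2) (Set.Icc 0 1 ×ˢ ω))
    (hD : ContinuousOn (fun q : ℝ × E => D q.1 q.2) (Set.Icc 0 1 ×ˢ ω))
    (hlt : ∀ t ∈ Set.Icc (0 : ℝ) 1, ∀ z ∈ ω, ∀ w ∈ S, w ≠ 0 → z + w ∈ ω → D t z w = 0 →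
      ρ t z < ρ t (z + w))
    {N : Set E} (hN : IsCompact N) {s : ℝ} (hs : 0 < s) (hNω : cthickening s N ⊆ ω) :
    ∃ c > 0, ∀ t ∈ Set.Icc (0 : ℝ) 1, ∀ z ∈ N, ∀ w ∈ S, ‖w‖ = s → D t z w = 0 →
      ρ t z + c ≤ ρ t (z + w) := by
  let T : Set (ℝ × E × E) := Set.Icc 0 1 ×ˢ N ×ˢ sphere 0 s
  have hT : IsCompact T := isCompact_Icc.prod (hN.prod (isCompact_sphere _ _))
  have hmem : ∀ q ∈ T, q.2.1 ∈ ω ∧ q.2.1 + q.2.2 ∈ ω := fun q hq =>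
    ⟨hNω (self_subset_cthickening _ hq.2.1),
      hNω (mem_cthickening_of_dist_le _ q.2.1 _ _ hq.2.1 (by
        have : ‖q.2.2‖ = s := by simpa using hq.2.2
        simp [this]))⟩
  have hD' : ContinuousOn (fun q : ℝ × E × E => D q.1 q.2.1 q.2.2) T := by
    have h1 : ContinuousOn (fun q : ℝ × E × E => D q.1 q.2.1) T :=
      hD.comp (f := fun q : ℝ × E × E => (q.1, q.2.1)) (by fun_prop)
        fun q hq => ⟨hq.1, (hmem q hq).1⟩
    exact h1.clm_apply (by fun_prop)
  have hg : ContinuousOn (fun q : ℝ × E × E => ρ q.1 (q.2.1 + q.2.2) - ρ q.1 q.2.1) T :=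
    (hρ.comp (f := fun q : ℝ × E × E => (q.1, q.2.1 + q.2.2)) (by fun_prop)
        fun q hq => ⟨hq.1, (hmem q hq).2⟩).sub
      (hρ.comp (f := fun q : ℝ × E × E => (q.1, q.2.1)) (by fun_prop)
        fun q hq => ⟨hq.1, (hmem q hq).1⟩)
  let T' : Set (ℝ × E × E) := (T ∩ (fun q : ℝ × E × E => D q.1 q.2.1 q.2.2) ⁻¹' {0}) ∩
    (fun q => q.2.2) ⁻¹' S
  have hT' : IsCompact T' := by
    refine IsCompact.inter_right ?_ (hS.preimage (by fun_prop))
    exact hT.of_isClosed_subset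
      (hD'.preimage_isClosed_of_isClosed hT.isClosed isClosed_singleton) Set.inter_subset_left
  have hTT : T' ⊆ T := fun q hq => hq.1.1
  have hpos : ∀ q ∈ T', 0 < ρ q.1 (q.2.1 + q.2.2) - ρ q.1 q.2.1 := by
    rintro ⟨t, z, w⟩ hq
    have hw : ‖w‖ = s := by simpa using hq.1.1.2.2
    exact sub_pos.2 (hlt t hq.1.1.1 z (hmem _ (hTT hq)).1 w hq.2
      (norm_pos_iff.1 (hw ▸ hs)) (hmem _ (hTT hq)).2 hq.1.2)
  obtain ⟨c, hc, hcT⟩ : ∃ c > 0, ∀ q ∈ T', c ≤ ρ q.1 (q.2.1 + q.2.2) - ρ q.1 q.2.1 := by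
    rcases T'.eq_empty_or_nonempty with h0 | h0
    · exact ⟨1, one_pos, by simp [h0]⟩
    · obtain ⟨q, hq, hmin⟩ := hT'.exists_isMinOn h0 (hg.mono hTT)
      exact ⟨_, hpos q hq, fun q' hq' => hmin hq'⟩
  refine ⟨c, hc, fun t ht z hz w hw hws h0 => ?_⟩
  have := hcT (t, z, w) ⟨⟨⟨ht, hz, by simpa using hws⟩, h0⟩, hw⟩
  simp only at this
  linarith

end Slices

/-- A unit vector in the complex span of two coordinate vectors, depending continuously on a real
functional that does not vanish on this span, on whose complex line the functional vanishes. -/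
theorem exists_complex_tangent {n : ℕ} {i j : Fin n} (hij : i ≠ j) :
    ∃ v : (EuclideanSpace ℂ (Fin n) →L[ℝ] ℝ) → EuclideanSpace ℂ (Fin n),
      (∀ ℓ, v ℓ ∈ Submodule.span ℂ
        {EuclideanSpace.single i (1 : ℂ), EuclideanSpace.single j (1 : ℂ)}) ∧
      (∀ (ℓ : EuclideanSpace ℂ (Fin n) →L[ℝ] ℝ) (η : ℂ), ℓ (η • v ℓ) = 0) ∧
      ∀ ℓ, (∃ w ∈ Submodule.span ℂ
        {EuclideanSpace.single i (1 : ℂ), EuclideanSpace.single j (1 : ℂ)}, ℓ w ≠ 0) →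
        ‖v ℓ‖ = 1 ∧ ContinuousAt v ℓ := by
  let e : Fin n → EuclideanSpace ℂ (Fin n) := fun k => EuclideanSpace.single k (1 : ℂ)
  let p : Fin n → (EuclideanSpace ℂ (Fin n) →L[ℝ] ℝ) → ℂ :=
    fun k ℓ => ℓ (e k) - Complex.I * ℓ (Complex.I • e k)
  let d : (EuclideanSpace ℂ (Fin n) →L[ℝ] ℝ) → EuclideanSpace ℂ (Fin n) :=
    fun ℓ => -(p j ℓ) • e i + p i ℓ • e j
  have hp : ∀ k ℓ (c : ℂ), ℓ (c • e k) = (c * p k ℓ).re := by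
    intro k ℓ c
    have hc : c • e k = c.re • e k + c.im • (Complex.I • e k) := by
      conv_lhs => rw [← Complex.re_add_im c, add_smul, mul_smul]
      rfl
    rw [hc, map_add, map_smul, map_smul]
    simp [p]
  have hd : Continuous d := by
    have hk (k) : Continuous (p k) := by
      have h1 (x : EuclideanSpace ℂ (Fin n)) :
          Continuous fun ℓ : EuclideanSpace ℂ (Fin n) →L[ℝ] ℝ => ((ℓ x : ℝ) : ℂ) :=
        Complex.continuous_ofReal.comp (continuous_eval_const x)
      exact (h1 _).sub (continuous_const.mul (h1 _))
    have := hk i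
    have := hk j
    fun_prop
  have hdS : ∀ ℓ, d ℓ ∈ Submodule.span ℂ {e i, e j} := fun ℓ =>
    Submodule.mem_span_pair.2 ⟨_, _, rfl⟩
  have hd0 : ∀ (ℓ : EuclideanSpace ℂ (Fin n) →L[ℝ] ℝ) (η : ℂ), ℓ (η • d ℓ) = 0 := by
    intro ℓ η
    simp only [d, smul_add, smul_smul, map_add, hp, ← Complex.add_re]
    rw [← Complex.zero_re]
    congr 1
    ring
  refine ⟨fun ℓ => ((‖d ℓ‖⁻¹ : ℝ) : ℂ) • d ℓ, fun ℓ => Submodule.smul_mem _ _ (hdS ℓ),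
    fun ℓ η => by rw [smul_smul]; exact hd0 _ _, fun ℓ ⟨w, hw, hℓw⟩ => ?_⟩
  have hne : d ℓ ≠ 0 := by
    intro h0
    have hj : p j ℓ = 0 := by
      have := congrArg (fun x : EuclideanSpace ℂ (Fin n) => x i) h0
      simpa [d, e, hij, hij.symm] using this
    have hi : p i ℓ = 0 := by
      have := congrArg (fun x : EuclideanSpace ℂ (Fin n) => x j) h0
      simpa [d, e, hij, hij.symm] using this
    obtain ⟨a, b, rfl⟩ := Submodule.mem_span_pair.1 hw
    refine hℓw ?_
    change ℓ (a • e i + b • e j) = 0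
    rw [map_add, hp, hp, hi, hj]
    simp
  have hn : ‖d ℓ‖ ≠ 0 := norm_ne_zero_iff.2 hne
  refine ⟨by simp [norm_smul, hn], ?_⟩
  have h1 : ContinuousAt (fun ℓ => ((‖d ℓ‖⁻¹ : ℝ) : ℂ)) ℓ :=
    Complex.continuous_ofReal.continuousAt.comp (hd.norm.continuousAt.inv₀ hn)
  exact h1.smul hd.continuousAt

/-- In a biholomorphic chart, the closure of a set given by a noncritical strict inequality is
given by the corresponding weak inequality. -/
theorem mem_closure_iff_of_chart {E : Type*} [NormedAddCommGroup E] [NormedSpace ℝ E]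
    {Ω ω S : Set E} {Φ Ψ : E → E} {ρ : E → ℝ} (hΩ : IsOpen Ω) (hω : IsOpen ω)
    (hΦ : ContinuousOn Φ Ω) (hΨ : ContinuousOn Ψ ω) (hΦΩ : Φ '' Ω = ω)
    (hΨΦ : ∀ z ∈ Ω, Ψ (Φ z) = z) (hρ : ∀ z ∈ ω, ∃ D : E →L[ℝ] ℝ, D ≠ 0 ∧ HasFDerivAt ρ D z)
    (hS : Φ '' (S ∩ Ω) = {z ∈ ω | ρ z < 0}) {x : E} (hx : x ∈ Ω) :
    x ∈ closure S ↔ ρ (Φ x) ≤ 0 := by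
  have hxω : Φ x ∈ ω := hΦΩ ▸ Set.mem_image_of_mem Φ hx
  obtain ⟨D, hD, hDρ⟩ := hρ _ hxω
  constructor
  · intro hcl
    by_contra! hpos
    have hΦx : ContinuousAt Φ x := hΦ.continuousAt (hΩ.mem_nhds hx)
    have hev : ∀ᶠ y in nhds x, 0 < ρ (Φ y) :=
      (ContinuousAt.comp (g := ρ) hDρ.continuousAt hΦx).eventually (lt_mem_nhds hpos)
    obtain ⟨y, hy, hyS⟩ := mem_closure_iff_nhds.1 hcl _ (hev.and (hΩ.mem_nhds hx))
    have : Φ y ∈ {z ∈ ω | ρ z < 0} := hS ▸ Set.mem_image_of_mem Φ ⟨hyS, hy.2⟩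
    exact lt_asymm hy.1 this.2
  · intro hle
    have h1 := mem_closure_sublevel hω hxω hDρ hD hle
    have h2 : Ψ (Φ x) ∈ closure S := by
      refine ContinuousWithinAt.mem_closure
        ((hΨ.continuousAt (hω.mem_nhds hxω)).continuousWithinAt) h1 ?_
      rw [← hS]
      rintro _ ⟨y, hy, rfl⟩
      rw [hΨΦ y hy.2]
      exact hy.1
    rwa [hΨΦ x hx] at h2

/-- A convex 2-bump gives a family of closed sets, growing from `closure A` to a set containing
`closure (A ∪ B)`, such that a short step along the family can be crossed by holomorphic discs
centered at arbitrary points and depending continuously on their centers. -/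
theorem IsConvexTwoBump.exists_spray {n : ℕ} {hn : 2 ≤ n}
    {X A B : Set (EuclideanSpace ℂ (Fin n))} (hbump : IsConvexTwoBump n hn X A B)
    (hB_cpt : IsCompact (closure B)) :
    ∃ (C : ℝ → Set (EuclideanSpace ℂ (Fin n))) (δ : ℝ), 0 < δ ∧ C 1 ⊆ closure A ∧
      closure (A ∪ B) ⊆ C 0 ∧
      ∀ t ∈ Set.Icc (0 : ℝ) 1, IsClosed (C t) ∧
      ∀ t' ∈ Set.Icc (0 : ℝ) 1, t - δ ≤ t' → t' ≤ t →
      ∃ P : EuclideanSpace ℂ (Fin n) → ℂ → EuclideanSpace ℂ (Fin n),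
        ContinuousOn (fun q : EuclideanSpace ℂ (Fin n) × ℂ => P q.1 q.2)
          (Set.univ ×ˢ closedBall 0 2) ∧
        (∀ x, DifferentiableOn ℂ (P x) (ball 0 2)) ∧ (∀ x, P x 0 = x) ∧
        (∀ x ∈ X, ∀ η ∈ closedBall (0 : ℂ) 1, P x η ∈ X) ∧
        (∀ x ∉ C t, ∀ η ∈ closedBall (0 : ℂ) 1, P x η ∉ closure A) ∧
        (∀ x ∉ C t, ∀ η ∈ sphere (0 : ℂ) 1, P x η ∉ C t') := by
  classical
  obtain ⟨Ω, ω, Φ, Ψ, ρA, ρB, hΩ, hΩX, hBΩ, hω, hωc, hΦ, hΨ, hΦΩ, hΨΦ, hΦΨ, hρA, hρB, hle,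
    hA', hAB', hconv, hcrit⟩ := hbump
  set S := Submodule.span ℂ {EuclideanSpace.single (⟨0, by omega⟩ : Fin n) (1 : ℂ),
    EuclideanSpace.single (⟨1, by omega⟩ : Fin n) (1 : ℂ)} with hSdef
  have hΦω : ∀ x ∈ Ω, Φ x ∈ ω := fun x hx => hΦΩ ▸ Set.mem_image_of_mem Φ hx
  have hΨΩ : ∀ z ∈ ω, Ψ z ∈ Ω := fun z hz => by
    rw [← hΦΩ] at hz
    obtain ⟨x, hx, rfl⟩ := hz
    rwa [hΨΦ x hx]
  have hdA : ∀ z ∈ ω, HasFDerivAt ρA (fderiv ℝ ρA z) z := fun z hz =>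
    ((hρA.contDiffAt (hω.mem_nhds hz)).differentiableAt (by simp)).hasFDerivAt
  have hdB : ∀ z ∈ ω, HasFDerivAt ρB (fderiv ℝ ρB z) z := fun z hz =>
    ((hρB.contDiffAt (hω.mem_nhds hz)).differentiableAt (by simp)).hasFDerivAt
  have hddA : ∀ z ∈ ω, HasFDerivAt (fderiv ℝ ρA) (fderiv ℝ (fderiv ℝ ρA) z) z := fun z hz =>
    (((hρA.contDiffAt (hω.mem_nhds hz)).fderiv_right (m := 1)
      (WithTop.coe_le_coe.2 le_top)).differentiableAt (by simp)).hasFDerivAt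
  have hddB : ∀ z ∈ ω, HasFDerivAt (fderiv ℝ ρB) (fderiv ℝ (fderiv ℝ ρB) z) z := fun z hz =>
    (((hρB.contDiffAt (hω.mem_nhds hz)).fderiv_right (m := 1)
      (WithTop.coe_le_coe.2 le_top)).differentiableAt (by simp)).hasFDerivAt
  let ρ : ℝ → EuclideanSpace ℂ (Fin n) → ℝ := fun t z => t * ρA z + (1 - t) * ρB z
  let D : ℝ → EuclideanSpace ℂ (Fin n) → EuclideanSpace ℂ (Fin n) →L[ℝ] ℝ :=
    fun t z => t • fderiv ℝ ρA z + (1 - t) • fderiv ℝ ρB z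
  have hρD : ∀ t, ∀ z ∈ ω, HasFDerivAt (ρ t) (D t z) z := fun t z hz =>
    ((hdA z hz).const_mul t).add ((hdB z hz).const_mul (1 - t))
  have hDD : ∀ t, ∀ z ∈ ω, HasFDerivAt (D t) (t • fderiv ℝ (fderiv ℝ ρA) z +
      (1 - t) • fderiv ℝ (fderiv ℝ ρB) z) z := fun t z hz =>
    ((hddA z hz).const_smul t).add ((hddB z hz).const_smul (1 - t))
  have hρcont : ContinuousOn (fun q : ℝ × EuclideanSpace ℂ (Fin n) => ρ q.1 q.2)
      (Set.Icc 0 1 ×ˢ ω) := by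
    have h1 : ContinuousOn (fun q : ℝ × EuclideanSpace ℂ (Fin n) => ρA q.2) (Set.Icc 0 1 ×ˢ ω) :=
      hρA.continuousOn.comp continuousOn_snd fun q hq => hq.2
    have h2 : ContinuousOn (fun q : ℝ × EuclideanSpace ℂ (Fin n) => ρB q.2) (Set.Icc 0 1 ×ˢ ω) :=
      hρB.continuousOn.comp continuousOn_snd fun q hq => hq.2
    exact (continuousOn_fst.mul h1).add ((continuousOn_const.sub continuousOn_fst).mul h2)
  have hDcont : ContinuousOn (fun q : ℝ × EuclideanSpace ℂ (Fin n) => D q.1 q.2)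
      (Set.Icc 0 1 ×ˢ ω) := by
    have h1 : ContinuousOn (fun q : ℝ × EuclideanSpace ℂ (Fin n) => fderiv ℝ ρA q.2)
        (Set.Icc 0 1 ×ˢ ω) :=
      ContinuousOn.comp (t := ω) (fun z hz => (hddA z hz).continuousAt.continuousWithinAt)
        continuousOn_snd fun q hq => hq.2
    have h2 : ContinuousOn (fun q : ℝ × EuclideanSpace ℂ (Fin n) => fderiv ℝ ρB q.2)
        (Set.Icc 0 1 ×ˢ ω) :=
      ContinuousOn.comp (t := ω) (fun z hz => (hddB z hz).continuousAt.continuousWithinAt)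
        continuousOn_snd fun q hq => hq.2
    exact (continuousOn_fst.smul h1).add ((continuousOn_const.sub continuousOn_fst).smul h2)
  have hDne : ∀ t ∈ Set.Icc (0 : ℝ) 1, ∀ z ∈ ω, ∃ w ∈ S, D t z w ≠ 0 := hcrit
  have hlt : ∀ t ∈ Set.Icc (0 : ℝ) 1, ∀ z ∈ ω, ∀ w ∈ (S : Set (EuclideanSpace ℂ (Fin n))),
      w ≠ 0 → z + w ∈ ω → D t z w = 0 → ρ t z < ρ t (z + w) := by
    intro t ht z hz w hw hw0 hzw h0
    refine lt_of_second_fderiv_pos hωc (hρD t) (hDD t) hz hzw (fun x hx => ?_) h0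
    obtain ⟨h1, h2⟩ := hconv x hx w hw hw0
    change 0 < t * fderiv ℝ (fderiv ℝ ρA) x w w + (1 - t) * fderiv ℝ (fderiv ℝ ρB) x w w
    rcases ht.1.eq_or_lt with rfl | ht0
    · simpa using h2
    · have := mul_pos ht0 h1
      have := mul_nonneg (sub_nonneg.2 ht.2) h2.le
      linarith
  have hclA : ∀ x ∈ Ω, (x ∈ closure A ↔ ρA (Φ x) ≤ 0) := fun x hx =>
    mem_closure_iff_of_chart hΩ hω hΦ.continuousOn hΨ.continuousOn hΦΩ hΨΦ
      (fun z hz => ⟨fderiv ℝ ρA z, by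
        obtain ⟨w, -, hw⟩ := hcrit 1 (by simp) z hz
        rintro h0
        simp [h0] at hw, hdA z hz⟩) hA' hx
  have hclAB : ∀ x ∈ Ω, (x ∈ closure (A ∪ B) ↔ ρB (Φ x) ≤ 0) := fun x hx =>
    mem_closure_iff_of_chart hΩ hω hΦ.continuousOn hΨ.continuousOn hΦΩ hΨΦ
      (fun z hz => ⟨fderiv ℝ ρB z, by
        obtain ⟨w, -, hw⟩ := hcrit 0 (by simp) z hz
        rintro h0
        simp [h0] at hw, hdB z hz⟩) hAB' hx
  have hρle : ∀ t ∈ Set.Icc (0 : ℝ) 1, ∀ z ∈ ω, ρB z ≤ ρ t z ∧ ρ t z ≤ ρA z := by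
    intro t ht z hz
    have h1 := hle z hz
    constructor
    · have := mul_le_mul_of_nonneg_left h1 ht.1
      simp only [ρ]; linarith
    · have := mul_le_mul_of_nonneg_left h1 (sub_nonneg.2 ht.2)
      simp only [ρ]; linarith
  let L := Φ '' closure B
  have hL : IsCompact L := hB_cpt.image_of_continuousOn (hΦ.continuousOn.mono hBΩ)
  have hLω : L ⊆ ω := by rintro _ ⟨x, hx, rfl⟩; exact hΦω x (hBΩ hx)
  obtain ⟨s₀, hs₀, hs₀ω⟩ := hL.exists_cthickening_subset_open hω hLω
  obtain ⟨s, hs, rfl⟩ : ∃ s > 0, s₀ = 4 * s := ⟨s₀ / 4, by positivity, by ring⟩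
  have hcω : ∀ a, a ≤ 4 * s → cthickening a L ⊆ ω := fun a ha =>
    (cthickening_mono ha L).trans hs₀ω
  obtain ⟨c, hc, hgain⟩ := exists_uniform_gain (S := (S : Set (EuclideanSpace ℂ (Fin n))))
    S.closed_of_finiteDimensional hρcont hDcont hlt hL.cthickening hs
    ((cthickening_cthickening_subset hs.le hs.le L).trans (hcω _ (by linarith)))
  obtain ⟨b, hb⟩ := hL.exists_bound_of_continuousOn (f := fun z => ρA z - ρB z)
    ((hρA.continuousOn.sub hρB.continuousOn).mono hLω)
  obtain ⟨χ, hχ0, hχ1, hχ⟩ := exists_continuous_zero_one_of_isClosed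
    (s := (thickening (2 * s) L)ᶜ) (t := cthickening s L) isOpen_thickening.isClosed_compl
    isClosed_cthickening (Set.disjoint_compl_left_iff_subset.2
      (cthickening_subset_thickening' (by positivity) (by linarith) L))
  obtain ⟨v, hvS, hv0, hv⟩ := exists_complex_tangent (i := (⟨0, by omega⟩ : Fin n))
    (j := ⟨1, by omega⟩) (by simp)
  let C : ℝ → Set (EuclideanSpace ℂ (Fin n)) := fun t =>
    closure A ∪ (closure B ∩ (fun x => ρ t (Φ x)) ⁻¹' Set.Iic 0)
  refine ⟨C, c / (|b| + 1), by positivity, ?_, ?_, fun t ht => ⟨?_, ?_⟩⟩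
  · rintro x (hx | ⟨hx, hx0⟩)
    · exact hx
    · refine (hclA x (hBΩ hx)).2 ?_
      simpa [ρ] using hx0
  · intro x hx
    rw [closure_union] at hx
    refine hx.imp id fun hx => ⟨hx, ?_⟩
    have := (hclAB x (hBΩ hx)).1 (closure_mono Set.subset_union_right hx)
    simpa [ρ] using this
  · refine isClosed_closure.union
      (ContinuousOn.preimage_isClosed_of_isClosed ?_ isClosed_closure isClosed_Iic)
    exact hρcont.comp (f := fun x => (t, Φ x))
      (continuousOn_const.prodMk (hΦ.continuousOn.mono hBΩ)) fun x hx => ⟨ht, hΦω x (hBΩ hx)⟩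
  intro t' ht' htt' ht't
  let u : EuclideanSpace ℂ (Fin n) → EuclideanSpace ℂ (Fin n) :=
    fun z => ((s * χ z : ℝ) : ℂ) • v (D t z)
  have hu : ContinuousOn u ω := by
    have h1 : ContinuousOn (D t) ω := fun z hz => (hDD t z hz).continuousAt.continuousWithinAt
    have h2 : ContinuousOn (fun z => v (D t z)) ω := fun z hz =>
      (hv (D t z) (hDne t ht z hz)).2.comp_continuousWithinAt (h1 z hz)
    exact (by fun_prop : Continuous fun z => ((s * χ z : ℝ) : ℂ)).continuousOn.smul h2
  have hunorm : ∀ z ∈ ω, ‖u z‖ = s * χ z := by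
    intro z hz
    have h1 : 0 ≤ s * χ z := mul_nonneg hs.le (hχ z).1
    simp only [u, norm_smul, (hv (D t z) (hDne t ht z hz)).1, Complex.norm_real, mul_one,
      Real.norm_of_nonneg h1]
  have huS : ∀ z (η : ℂ), η • u z ∈ S := fun z η =>
    S.smul_mem _ (S.smul_mem _ (hvS _))
  have hDu : ∀ z (η : ℂ), D t z (η • u z) = 0 := fun z η => by
    simp only [u, smul_smul]
    exact hv0 _ _
  have humove : ∀ z ∈ ω, ∀ η ∈ closedBall (0 : ℂ) 2, z + η • u z ∈ ω := by
    intro z hz η hη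
    by_cases hzL : z ∈ thickening (2 * s) L
    · refine hs₀ω ?_
      have h1 : ‖η • u z‖ ≤ 2 * s := by
        rw [norm_smul, hunorm z hz]
        have h2 : ‖η‖ ≤ 2 := by simpa using hη
        exact mul_le_mul h2 (mul_le_of_le_one_right hs.le (hχ z).2)
          (mul_nonneg hs.le (hχ z).1) (by norm_num)
      have h2 := cthickening_cthickening_subset (by positivity : 0 ≤ 2 * s)
        (by positivity : 0 ≤ 2 * s) L
      rw [← two_mul, ← mul_assoc] at h2
      norm_num at h2
      exact h2 (mem_cthickening_of_dist_le _ z _ _ (thickening_subset_cthickening _ _ hzL)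
        (by simpa using h1))
    · have : χ z = 0 := hχ0 hzL
      simpa [u, this] using hz
  have hup : ∀ z ∈ ω, ∀ η ∈ closedBall (0 : ℂ) 1, ρ t z ≤ ρ t (z + η • u z) := by
    intro z hz η hη
    by_cases h0 : η • u z = 0
    · rw [h0, add_zero]
    · exact (hlt t ht z hz _ (huS z η) h0
        (humove z hz η (closedBall_subset_closedBall (by norm_num) hη)) (hDu z η)).le
  let P : EuclideanSpace ℂ (Fin n) → ℂ → EuclideanSpace ℂ (Fin n) :=
    fun x η => if x ∈ Ω then Ψ (Φ x + η • u (Φ x)) else x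
  have hP : ∀ x ∈ Ω, ∀ η, P x η = Ψ (Φ x + η • u (Φ x)) := fun x hx η => if_pos hx
  have hP' : ∀ x ∉ Ω, ∀ η, P x η = x := fun x hx η => if_neg hx
  have hPΩ : ∀ x ∈ Ω, ∀ η ∈ closedBall (0 : ℂ) 2, P x η ∈ Ω ∧ Φ (P x η) = Φ x + η • u (Φ x) := by
    intro x hx η hη
    have := humove _ (hΦω x hx) η hη
    rw [hP x hx]
    exact ⟨hΨΩ _ this, hΦΨ _ this⟩
  have hpos : ∀ x ∈ Ω, x ∉ C t → 0 < ρ t (Φ x) := by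
    intro x hx hxC
    by_contra! h0
    refine hxC ?_
    have h1 := (hclAB x hx).2 ((hρle t ht _ (hΦω x hx)).1.trans h0)
    rw [closure_union] at h1
    exact h1.imp id fun h1 => ⟨h1, h0⟩
  have h12 : closedBall (0 : ℂ) 1 ⊆ closedBall 0 2 := closedBall_subset_closedBall (by norm_num)
  have hPA : ∀ x ∉ C t, ∀ η ∈ closedBall (0 : ℂ) 1, P x η ∉ closure A := by
    intro x hxC η hη hcl
    by_cases hx : x ∈ Ω
    · obtain ⟨h1, h2⟩ := hPΩ x hx η (h12 hη)
      have h3 := (hclA _ h1).1 hcl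
      have h4 := (hρle t ht _ (hΦω _ h1)).2
      rw [h2] at h3 h4
      linarith [hpos x hx hxC, hup _ (hΦω x hx) η hη]
    · rw [hP' x hx] at hcl
      exact hxC (Or.inl hcl)
  refine ⟨P, ?_, fun x => ?_, fun x => ?_, fun x hx η hη => ?_, hPA, ?_⟩
  · rintro ⟨x, η⟩ ⟨-, hη⟩
    by_cases hx : x ∈ Ω
    · have h1 : ContinuousOn (fun q : EuclideanSpace ℂ (Fin n) × ℂ => Ψ (Φ q.1 + q.2 • u (Φ q.1)))
          (Ω ×ˢ closedBall 0 2) := by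
        have hΦ1 : ContinuousOn (fun q : EuclideanSpace ℂ (Fin n) × ℂ => Φ q.1)
            (Ω ×ˢ closedBall 0 2) := hΦ.continuousOn.comp continuousOn_fst fun q hq => hq.1
        have hu1 : ContinuousOn (fun q : EuclideanSpace ℂ (Fin n) × ℂ => u (Φ q.1))
            (Ω ×ˢ closedBall 0 2) := hu.comp hΦ1 fun q hq => hΦω _ hq.1
        exact hΨ.continuousOn.comp (hΦ1.add (continuousOn_snd.smul hu1))
          fun q hq => humove _ (hΦω _ hq.1) _ hq.2
      have h2 : ContinuousOn (fun q : EuclideanSpace ℂ (Fin n) × ℂ => P q.1 q.2)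
          (Ω ×ˢ closedBall 0 2) := h1.congr fun q hq => hP _ hq.1 _
      refine (h2 (x, η) ⟨hx, hη⟩).mono_of_mem_nhdsWithin ?_
      refine Filter.mem_of_superset
        (Filter.inter_mem self_mem_nhdsWithin (mem_nhdsWithin_of_mem_nhds
        ((hΩ.preimage continuous_fst).mem_nhds (x := (x, η)) hx))) fun q hq => ⟨hq.2, hq.1.2⟩
    · let T := Ψ '' cthickening (2 * s) L
      have hTω : cthickening (2 * s) L ⊆ ω := hcω _ (by linarith)
      have hT : IsClosed T :=
        (hL.cthickening.image_of_continuousOn (hΨ.continuousOn.mono hTω)).isClosed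
      have hxT : x ∉ T := by
        rintro ⟨z, hz, rfl⟩
        exact hx (hΨΩ z (hTω hz))
      have hPx : ∀ y ∉ T, ∀ η, P y η = y := by
        intro y hy η
        by_cases hyΩ : y ∈ Ω
        · have : χ (Φ y) = 0 := hχ0 fun h =>
            hy ⟨Φ y, thickening_subset_cthickening _ _ h, hΨΦ y hyΩ⟩
          rw [hP y hyΩ]
          simp [u, this, hΨΦ y hyΩ]
        · exact hP' y hyΩ η
      refine (continuous_fst.continuousAt.congr ?_).continuousWithinAt
      filter_upwards [(hT.isOpen_compl.preimage continuous_fst).mem_nhds (x := (x, η)) hxT]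
        with q hq using (hPx _ hq _).symm
  · by_cases hx : x ∈ Ω
    · have h1 : DifferentiableOn ℂ (fun η : ℂ => Ψ (Φ x + η • u (Φ x))) (ball 0 2) :=
        hΨ.comp (by fun_prop) fun η hη => humove _ (hΦω x hx) η (ball_subset_closedBall hη)
      exact h1.congr fun η _ => hP x hx η
    · exact (differentiableOn_const x).congr fun η _ => hP' x hx η
  · by_cases hx : x ∈ Ω
    · rw [hP x hx, zero_smul, add_zero, hΨΦ x hx]
    · exact hP' x hx 0
  · by_cases hxΩ : x ∈ Ω
    · exact hΩX (hPΩ x hxΩ η (h12 hη)).1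
    · rwa [hP' x hxΩ]
  · rintro x hxC η hη (hcl | ⟨hcl, h0⟩)
    · exact hPA x hxC η (sphere_subset_closedBall hη) hcl
    have hxΩ : x ∈ Ω := by
      by_contra hxΩ
      rw [hP' x hxΩ] at hcl
      exact hxΩ (hBΩ hcl)
    have hη1 : ‖η‖ = 1 := by simpa using hη
    have hxω := hΦω x hxΩ
    have h2 := (hPΩ x hxΩ η (h12 (sphere_subset_closedBall hη))).2
    have hyL : Φ (P x η) ∈ L := Set.mem_image_of_mem Φ hcl
    have hdist : dist (Φ x) (Φ (P x η)) ≤ s := by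
      rw [h2, dist_self_add_right, norm_smul, hη1, one_mul, hunorm _ hxω]
      exact mul_le_of_le_one_right hs.le (hχ _).2
    have hxL : Φ x ∈ cthickening s L := mem_cthickening_of_dist_le _ _ _ _ hyL hdist
    have hχx : χ (Φ x) = 1 := hχ1 hxL
    have h3 := hgain t ht _ hxL _ (huS (Φ x) η) (by
      rw [norm_smul, hη1, one_mul, hunorm _ hxω, hχx, mul_one]) (hDu _ η)
    rw [← h2] at h3
    have h4 := hpos x hxΩ hxC
    have h5 := hb _ hyL
    have h6 : ρ t (Φ (P x η)) - ρ t' (Φ (P x η)) =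
        (t - t') * (ρA (Φ (P x η)) - ρB (Φ (P x η))) := by simp only [ρ]; ring
    have h7 : (t - t') * (ρA (Φ (P x η)) - ρB (Φ (P x η))) ≤ c / (|b| + 1) * (|b| + 1) := by
      refine mul_le_mul (by linarith) ?_ (sub_nonneg.2 (hle _ (hLω hyL))) (by positivity)
      linarith [le_abs_self b, (le_abs_self _).trans h5]
    rw [div_mul_cancel₀ _ (by positivity)] at h7
    have h8 : ρ t' (Φ (P x η)) ≤ 0 := h0
    linarith

/-- One step of the deformation: boundary values avoiding `C` are pushed off `C'` along the
discs `P x`. -/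
theorem exists_disc_of_spray {n : ℕ} {X A C C' K : Set (EuclideanSpace ℂ (Fin n))}
    (hX : IsOpen X) (hK : IsCompact K) (hKA : K ⊆ closure A)
    (hC' : IsClosed C') {P : EuclideanSpace ℂ (Fin n) → ℂ → EuclideanSpace ℂ (Fin n)}
    (hPc : ContinuousOn (fun q : EuclideanSpace ℂ (Fin n) × ℂ => P q.1 q.2)
      (Set.univ ×ˢ closedBall 0 2))
    (hPd : ∀ x, DifferentiableOn ℂ (P x) (ball 0 2)) (hP0 : ∀ x, P x 0 = x)
    (hPX : ∀ x ∈ X, ∀ η ∈ closedBall (0 : ℂ) 1, P x η ∈ X)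
    (hPA : ∀ x ∉ C, ∀ η ∈ closedBall (0 : ℂ) 1, P x η ∉ closure A)
    (hPC : ∀ x ∉ C, ∀ η ∈ sphere (0 : ℂ) 1, P x η ∉ C')
    {f : ℂ → EuclideanSpace ℂ (Fin n)} (hf_cont : ContinuousOn f (closedBall (0 : ℂ) 1))
    (hf_hol : DifferentiableOn ℂ f (ball (0 : ℂ) 1))
    (hf_mem : ∀ ζ ∈ closedBall (0 : ℂ) 1, f ζ ∈ X)
    (hf_bd : ∀ ζ ∈ sphere (0 : ℂ) 1, f ζ ∉ C) {r : ℝ} (hr1 : r < 1)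
    (hfK : ∀ ζ ∈ closedBall (0 : ℂ) 1 \ ball 0 r, f ζ ∉ K) {ε : ℝ} (hε : 0 < ε) :
    ∃ g : ℂ → EuclideanSpace ℂ (Fin n), ContinuousOn g (closedBall (0 : ℂ) 1) ∧
      DifferentiableOn ℂ g (ball (0 : ℂ) 1) ∧ (∀ ζ ∈ closedBall (0 : ℂ) 1, g ζ ∈ X) ∧
      (∀ ζ ∈ sphere (0 : ℂ) 1, g ζ ∉ C') ∧
      (∀ ζ ∈ closedBall (0 : ℂ) 1 \ ball 0 r, g ζ ∉ K) ∧
      (∀ ζ ∈ closedBall (0 : ℂ) r, dist (g ζ) (f ζ) < ε) ∧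
      g 0 = f 0 ∧ deriv g 0 = deriv f 0 := by
  have hcpt : IsCompact (closedBall (0 : ℂ) 1) := isCompact_closedBall 0 1
  obtain ⟨δ₁, hδ₁, h₁⟩ := (hcpt.image_of_continuousOn hf_cont).exists_thickening_subset_open hX
    (Set.image_subset_iff.2 hf_mem)
  obtain ⟨δ₂, hδ₂, h₂⟩ := ((hcpt.diff isOpen_ball).image_of_continuousOn
    (hf_cont.mono Set.sdiff_subset)).exists_thickening_subset_open hK.isClosed.isOpen_compl
    (Set.image_subset_iff.2 hfK)
  have hcirc : ∀ ζ : Circle, (ζ : ℂ) ∈ sphere (0 : ℂ) 1 := fun ζ =>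
    mem_sphere_zero_iff_norm.2 ζ.norm_coe
  have hcirc' : ∀ ζ : Circle, (ζ : ℂ) ∈ closedBall (0 : ℂ) 1 := fun ζ =>
    sphere_subset_closedBall (hcirc ζ)
  have hfc : Continuous fun ζ : Circle => f ζ :=
    hf_cont.comp_continuous continuous_subtype_val hcirc'
  obtain ⟨g, hgc, hgd, hgV, hgU, hgr, hg0, hg'⟩ := exists_riemann_hilbert f hf_cont hf_hol
    (fun ζ η => P (f ζ) η)
    (hPc.comp (f := fun q : Circle × ℂ => (f q.1, q.2))
      ((hfc.comp continuous_fst).prodMk continuous_snd).continuousOn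
      fun q hq => ⟨Set.mem_univ _, hq.2⟩)
    (fun ζ => hPd _) (fun ζ => hP0 _) (hX.sdiff hK.isClosed) hC'.isOpen_compl
    (fun ζ η hη => ⟨hPX _ (hf_mem _ (hcirc' ζ)) η hη,
      fun h => hPA _ (hf_bd _ (hcirc ζ)) η hη (hKA h)⟩)
    (fun ζ η hη => hPC _ (hf_bd _ (hcirc ζ)) η hη) hr1 (lt_min hε (lt_min hδ₁ hδ₂))
  refine ⟨g, hgc, hgd, fun ζ hζ => ?_, hgV, fun ζ hζ => ?_,
    fun ζ hζ => (hgr ζ hζ).trans_le (min_le_left _ _), hg0, hg'⟩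
  · rcases hgU ζ hζ with h | h
    · exact h₁ (mem_thickening_iff.2 ⟨f ζ, Set.mem_image_of_mem f hζ,
        h.trans_le ((min_le_right _ _).trans (min_le_left _ _))⟩)
    · exact h.1
  · rcases hgU ζ hζ.1 with h | h
    · exact h₂ (mem_thickening_iff.2 ⟨f ζ, Set.mem_image_of_mem f hζ,
        h.trans_le ((min_le_right _ _).trans (min_le_right _ _))⟩)
    · exact h.2

/-- Before rescaling, the boundary of the disc can be pushed off `closure (A ∪ B)` while keeping
the derivative at the center. -/
theorem IsConvexTwoBump.exists_disc {n : ℕ} {hn : 2 ≤ n}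
    {X A B K : Set (EuclideanSpace ℂ (Fin n))} (hbump : IsConvexTwoBump n hn X A B)
    (hB_cpt : IsCompact (closure B)) (hX : IsOpen X) (hK : IsCompact K) (hKA : K ⊆ closure A)
    {f : ℂ → EuclideanSpace ℂ (Fin n)} (hf_cont : ContinuousOn f (closedBall (0 : ℂ) 1))
    (hf_hol : DifferentiableOn ℂ f (ball (0 : ℂ) 1))
    (hf_mem : ∀ ζ ∈ closedBall (0 : ℂ) 1, f ζ ∈ X)
    (hf_bd : ∀ ζ ∈ sphere (0 : ℂ) 1, f ζ ∉ closure A) {r : ℝ} (hr1 : r < 1)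
    (hfK : ∀ ζ ∈ closedBall (0 : ℂ) 1 \ ball 0 r, f ζ ∉ K) {ε : ℝ} (hε : 0 < ε) :
    ∃ g : ℂ → EuclideanSpace ℂ (Fin n), ContinuousOn g (closedBall (0 : ℂ) 1) ∧
      DifferentiableOn ℂ g (ball (0 : ℂ) 1) ∧ (∀ ζ ∈ closedBall (0 : ℂ) 1, g ζ ∈ X) ∧
      (∀ ζ ∈ sphere (0 : ℂ) 1, g ζ ∉ closure (A ∪ B)) ∧
      (∀ ζ ∈ closedBall (0 : ℂ) 1 \ ball 0 r, g ζ ∉ K) ∧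
      (∀ ζ ∈ closedBall (0 : ℂ) r, dist (g ζ) (f ζ) < ε) ∧
      g 0 = f 0 ∧ deriv g 0 = deriv f 0 := by
  obtain ⟨C, δ, hδ, hC1, hC0, hC⟩ := hbump.exists_spray hB_cpt
  have hmem : ∀ j : ℕ, max 0 (1 - j * δ) ∈ Set.Icc (0 : ℝ) 1 := fun j =>
    ⟨le_max_left _ _, max_le zero_le_one (sub_le_self _ (by positivity))⟩
  have key : ∀ j : ℕ, ∀ ε : ℝ, 0 < ε → ∃ g : ℂ → EuclideanSpace ℂ (Fin n),
      ContinuousOn g (closedBall (0 : ℂ) 1) ∧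
      DifferentiableOn ℂ g (ball (0 : ℂ) 1) ∧ (∀ ζ ∈ closedBall (0 : ℂ) 1, g ζ ∈ X) ∧
      (∀ ζ ∈ sphere (0 : ℂ) 1, g ζ ∉ C (max 0 (1 - j * δ))) ∧
      (∀ ζ ∈ closedBall (0 : ℂ) 1 \ ball 0 r, g ζ ∉ K) ∧
      (∀ ζ ∈ closedBall (0 : ℂ) r, dist (g ζ) (f ζ) < ε) ∧
      g 0 = f 0 ∧ deriv g 0 = deriv f 0 := by
    intro j
    induction j with
    | zero =>
      intro ε hε
      refine ⟨f, hf_cont, hf_hol, hf_mem, fun ζ hζ h => hf_bd ζ hζ (hC1 ?_), hfK,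
        fun ζ _ => by simpa using hε, rfl, rfl⟩
      simpa using h
    | succ j ih =>
      intro ε hε
      obtain ⟨g, hgc, hgd, hgX, hgC, hgK, hgr, hg0, hg'⟩ := ih (ε / 2) (half_pos hε)
      obtain ⟨-, hP⟩ := hC _ (hmem j)
      obtain ⟨P, hPc, hPd, hP0, hPX, hPA, hPC⟩ := hP _ (hmem (j + 1))
        (by
          rw [sub_le_iff_le_add]
          refine max_le (add_nonneg (le_max_left _ _) hδ.le) ?_
          have := le_max_right 0 (1 - ((j + 1 : ℕ) : ℝ) * δ)
          push_cast at this ⊢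
          linarith)
        (max_le_max le_rfl (by push_cast; linarith))
      obtain ⟨h, hhc, hhd, hhX, hhC, hhK, hhr, hh0, hh'⟩ := exists_disc_of_spray hX hK hKA
        (hC _ (hmem (j + 1))).1 hPc hPd hP0 hPX hPA hPC hgc hgd hgX hgC hr1 hgK (half_pos hε)
      refine ⟨h, hhc, hhd, hhX, hhC, hhK, fun ζ hζ => ?_, hh0.trans hg0, hh'.trans hg'⟩
      linarith [dist_triangle (h ζ) (g ζ) (f ζ), hhr ζ hζ, hgr ζ hζ]
  obtain ⟨j, hj⟩ := exists_nat_gt (1 / δ)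
  obtain ⟨g, hgc, hgd, hgX, hgC, hg⟩ := key j ε hε
  rw [max_eq_left (by linarith [(div_lt_iff₀ hδ).1 hj])] at hgC
  exact ⟨g, hgc, hgd, hgX, fun ζ hζ h => hgC ζ hζ (hC0 h), hg⟩

/-- Rescaling a disc by a factor close to `1` is a uniformly small perturbation. -/
theorem exists_rescale_dist_lt {E : Type*} [PseudoMetricSpace E] {g : ℂ → E}
    (hg : ContinuousOn g (closedBall (0 : ℂ) 1)) {r : ℝ} (hr0 : 0 < r) (hr1 : r < 1)
    {ε : ℝ} (hε : 0 < ε) :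
    ∃ R : ℝ, r < R ∧ R < 1 ∧ ∀ ζ ∈ closedBall (0 : ℂ) 1, dist (g (R * ζ)) (g ζ) < ε := by
  obtain ⟨δ, hδ, h⟩ := Metric.uniformContinuousOn_iff.1
    ((isCompact_closedBall (0 : ℂ) 1).uniformContinuousOn_of_continuous hg) ε hε
  obtain ⟨R, hR, hR1⟩ := exists_between (max_lt hr1 (sub_lt_self 1 hδ))
  have hrR := (le_max_left _ _).trans_lt hR
  have hδR := (le_max_right _ _).trans_lt hR
  refine ⟨R, hrR, hR1, fun ζ hζ => ?_⟩
  have hζ' : ‖ζ‖ ≤ 1 := mem_closedBall_zero_iff.1 hζ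
  refine h _ (mem_closedBall_zero_iff.2 ?_) _ hζ ?_
  · rw [norm_mul, Complex.norm_of_nonneg (hr0.trans hrR).le]
    exact mul_le_one₀ hR1.le (norm_nonneg _) hζ'
  · have : (R : ℂ) * ζ - ζ = ((R - 1 : ℝ) : ℂ) * ζ := by push_cast; ring
    rw [dist_eq_norm, this, norm_mul, Complex.norm_real, Real.norm_eq_abs, abs_sub_comm,
      abs_of_pos (sub_pos.2 hR1)]
    nlinarith [norm_nonneg ζ]

/-- the paper's Lemma 3.1 for domains in `ℂⁿ`. If `B` is a convex
2-bump on `A` and the boundary of a holomorphic disc `f` avoids `cl(A)`, then the disc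
can be perturbed so that its boundary avoids `cl(A ∪ B)`, staying close to `f` on
`{|ζ| ≤ r}`, avoiding a compact `K ⊆ A` on `{r ≤ |ζ| ≤ 1}`, keeping the center and
rescaling the derivative at the center. -/
theorem push_boundary_over_convex_bump
    (n : ℕ) (hn : 2 ≤ n)
    (X : Set (EuclideanSpace ℂ (Fin n))) (hX : IsOpen X)
    (A B : Set (EuclideanSpace ℂ (Fin n)))
    (hA : IsOpen A) (hB : IsOpen B)
    (hA_cpt : IsCompact (closure A)) (hB_cpt : IsCompact (closure B))
    (hAX : closure A ⊆ X) (hBX : closure B ⊆ X)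
    (hbump : IsConvexTwoBump n hn X A B)
    (K : Set (EuclideanSpace ℂ (Fin n))) (hK : IsCompact K) (hKA : K ⊆ A)
    (f : ℂ → EuclideanSpace ℂ (Fin n))
    (hf_cont : ContinuousOn f (closedBall (0 : ℂ) 1))
    (hf_hol : DifferentiableOn ℂ f (ball (0 : ℂ) 1))
    (hf_mem : ∀ ζ ∈ closedBall (0 : ℂ) 1, f ζ ∈ X)
    (hf_bd : (f '' sphere (0 : ℂ) 1) ∩ closure A = ∅)
    (r : ℝ) (hr0 : 0 < r) (hr1 : r < 1)
    (hfK : (f '' (closedBall (0 : ℂ) 1 \ ball (0 : ℂ) r)) ∩ K = ∅)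
    (ε : ℝ) (hε : 0 < ε) :
    ∃ (g : ℂ → EuclideanSpace ℂ (Fin n)) (R : ℝ),
      ContinuousOn g (closedBall (0 : ℂ) 1) ∧
      DifferentiableOn ℂ g (ball (0 : ℂ) 1) ∧
      (∀ ζ ∈ closedBall (0 : ℂ) 1, g ζ ∈ X) ∧
      (g '' sphere (0 : ℂ) 1) ∩ closure (A ∪ B) = ∅ ∧
      (∀ ζ ∈ closedBall (0 : ℂ) r, dist (g ζ) (f ζ) < ε) ∧
      (g '' (closedBall (0 : ℂ) 1 \ ball (0 : ℂ) r)) ∩ K = ∅ ∧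
      g 0 = f 0 ∧
      r < R ∧ R < 1 ∧ deriv g 0 = R • deriv f 0 := by
  have hdis : ∀ {S : Set ℂ} {T : Set (EuclideanSpace ℂ (Fin n))}
      {h : ℂ → EuclideanSpace ℂ (Fin n)}, (h '' S) ∩ T = ∅ ↔ ∀ ζ ∈ S, h ζ ∉ T := by
    intro S T h
    rw [← Set.disjoint_iff_inter_eq_empty, Set.disjoint_left, Set.forall_mem_image]
  rw [hdis] at hf_bd hfK
  obtain ⟨g, hgc, hgd, hgX, hgC, hgK, hgr, hg0, hg'⟩ := hbump.exists_disc hB_cpt hX hK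
    (hKA.trans subset_closure) hf_cont hf_hol hf_mem hf_bd hr1 hfK (half_pos hε)
  have hcpt : IsCompact (closedBall (0 : ℂ) 1) := isCompact_closedBall 0 1
  obtain ⟨δ₁, hδ₁, h₁⟩ := ((isCompact_sphere (0 : ℂ) 1).image_of_continuousOn
    (hgc.mono sphere_subset_closedBall)).exists_thickening_subset_open
    isClosed_closure.isOpen_compl (Set.image_subset_iff.2 hgC)
  obtain ⟨δ₂, hδ₂, h₂⟩ := ((hcpt.diff isOpen_ball).image_of_continuousOn
    (hgc.mono Set.sdiff_subset)).exists_thickening_subset_open hK.isClosed.isOpen_compl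
    (Set.image_subset_iff.2 hgK)
  obtain ⟨R, hrR, hR1, hR⟩ := exists_rescale_dist_lt hgc hr0 hr1
    (lt_min (half_pos hε) (lt_min hδ₁ hδ₂))
  have hnorm : ∀ ζ : ℂ, ‖(R : ℂ) * ζ‖ ≤ ‖ζ‖ := fun ζ => by
    rw [norm_mul, Complex.norm_of_nonneg (hr0.trans hrR).le]
    exact mul_le_of_le_one_left (norm_nonneg _) hR1.le
  have hmaps : Set.MapsTo (fun ζ : ℂ => (R : ℂ) * ζ) (closedBall 0 1) (closedBall 0 1) :=
    fun ζ hζ => mem_closedBall_zero_iff.2 ((hnorm ζ).trans (mem_closedBall_zero_iff.1 hζ))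
  have hmaps' : Set.MapsTo (fun ζ : ℂ => (R : ℂ) * ζ) (ball 0 1) (ball 0 1) :=
    fun ζ hζ => mem_ball_zero_iff.2 ((hnorm ζ).trans_lt (mem_ball_zero_iff.1 hζ))
  refine ⟨fun ζ => g (R * ζ), R, hgc.comp (by fun_prop) hmaps, hgd.comp (by fun_prop) hmaps',
    fun ζ hζ => hgX _ (hmaps hζ), hdis.2 fun ζ hζ => ?_, fun ζ hζ => ?_, hdis.2 fun ζ hζ => ?_,
    by simpa using hg0, hrR, hR1, ?_⟩
  · exact h₁ (mem_thickening_iff.2 ⟨g ζ, Set.mem_image_of_mem g hζ,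
      (hR ζ (sphere_subset_closedBall hζ)).trans_le
        ((min_le_right _ _).trans (min_le_left _ _))⟩)
  · have := (hR ζ (closedBall_subset_closedBall hr1.le hζ)).trans_le (min_le_left _ _)
    linarith [dist_triangle (g (R * ζ)) (g ζ) (f ζ), hgr ζ hζ]
  · exact h₂ (mem_thickening_iff.2 ⟨g ζ, Set.mem_image_of_mem g hζ,
      (hR ζ hζ.1).trans_le ((min_le_right _ _).trans (min_le_right _ _))⟩)
  · rw [deriv_comp_mul_left, mul_zero, hg', Complex.coe_smul]
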